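/- arXiv:1708.00715 — 2 statements merged into one kernel-verified Lean document; each statement's English description precedes it below -/
import Mathlib

section
/- For λ₁ > 1, λ₂ > 0 and r ∈ [0,1), the integral ∫₀^π sin^{λ₁−1}(t)/(1 + r² − 2r cos t)^{λ₂} dt equals B(λ₁/2, 1/2) · F(λ₂, λ₂ + (1−λ₁)/2; (1+λ₁)/2; r²), where B is the Beta function and F is the Gauss hypergeometric function. -/
open Real Set

/-- The Gauss hypergeometric function `F(a,b;c;x)` as a power series in `x`. -/
noncomputable def hyperF (a b c x : ℝ) : ℝ :=
  ∑' k : ℕ, ((ascPochhammer ℝ k).eval a * (ascPochhammer ℝ k).eval b /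
    (ascPochhammer ℝ k).eval c) * x ^ k / (Nat.factorial k)

/-- The Beta function `B(p,q) = Γ(p)Γ(q)/Γ(p+q)`. -/
noncomputable def betaFn (p q : ℝ) : ℝ := Gamma p * Gamma q / Gamma (p + q)

open Filter MeasureTheory Topology
open Finset.HasAntidiagonal (antidiagonal mem_antidiagonal)
open scoped Nat

/-
For `|r| < 1` the kernel `(1 + r ^ 2 - 2 * r * x) ^ (-a)` is the generating function of the
Gegenbauer polynomials `C_n^(a)(x)`. Expanding it by the binomial theorem in `2 * r * x - r ^ 2`
gives the explicit coefficients, but converges only for small `r`. Factoring it at `x = cos t` as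
`(1 - r * e ^ (i * t)) ^ (-a) * (1 - r * e ^ (-i * t)) ^ (-a)` gives a cosine expansion that
converges for all `|r| < 1`, uniformly in `t`. Both are power series in `r`, hence have the same
coefficients, and the generating series may be integrated term by term against
`sin t ^ (p - 1)`. The odd terms vanish under `t ↦ π - t`; an even term is a finite sum of
trigonometric Beta integrals, which the Chu-Vandermonde identity puts in closed form.
-/

section Pochhammer

theorem ascPochhammer_eval_mul_eval_add {R : Type*} [CommSemiring R] (x : R) (m n : ℕ) :
    (ascPochhammer R m).eval x * (ascPochhammer R n).eval (x + m) =
      (ascPochhammer R (m + n)).eval x := by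
  simp [← ascPochhammer_mul]

variable {R : Type*} [CommRing R] [BinomialRing R]

theorem choose_neg_eq_neg_one_pow_mul_multichoose (x : R) (n : ℕ) :
    Ring.choose (-x) n = (-1) ^ n * Ring.multichoose x n := by
  rw [Ring.choose_neg', Int.negOnePow_def, zpow_natCast, Units.smul_def, Units.val_pow_eq_pow_val]
  simp

theorem sum_antidiagonal_multichoose_mul (x y : R) (n : ℕ) :
    ∑ p ∈ antidiagonal n, Ring.multichoose x p.1 * Ring.multichoose y p.2 =
      Ring.multichoose (x + y) n := by
  have hsign : (-1 : R) ^ n * (-1) ^ n = 1 := by rw [← mul_pow]; simp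
  have h := Ring.add_choose_eq n (Commute.all (-x) (-y))
  rw [← neg_add, choose_neg_eq_neg_one_pow_mul_multichoose] at h
  rw [← one_mul (Ring.multichoose _ n), ← hsign, mul_assoc, h, Finset.mul_sum]
  refine Finset.sum_congr rfl fun p hp => ?_
  rw [choose_neg_eq_neg_one_pow_mul_multichoose, choose_neg_eq_neg_one_pow_mul_multichoose,
    ← mem_antidiagonal.mp hp, mul_mul_mul_comm, ← pow_add, ← mul_assoc,
    ← pow_add, ← two_mul, pow_mul]
  simp

theorem neg_one_pow_mul_multichoose (x : R) (n : ℕ) :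
    (-1) ^ n * Ring.multichoose x n = Ring.multichoose (1 - x - n) n := by
  rw [← choose_neg_eq_neg_one_pow_mul_multichoose, Ring.multichoose_eq]
  congr 1
  ring

variable {K : Type*} [Field K] [CharZero K]

theorem multichoose_eq_ascPochhammer_eval_div (x : K) (n : ℕ) :
    Ring.multichoose x n = (ascPochhammer K n).eval x / n ! := by
  rw [eq_div_iff (mod_cast n.factorial_ne_zero), mul_comm, ← nsmul_eq_mul,
    Ring.factorial_nsmul_multichoose_eq_ascPochhammer, Polynomial.ascPochhammer_smeval_eq_eval]

-- A terminating `₂F₁(-n, a + n; c; 1)`: reflecting `(c + k)_(n - k)` turns it into Vandermonde.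
theorem sum_antidiagonal_neg_one_pow_mul_ascPochhammer (a : K) {c : K} {n : ℕ}
    (hc : (ascPochhammer K n).eval c ≠ 0) :
    ∑ p ∈ antidiagonal n, (-1) ^ p.2 * (ascPochhammer K (n + p.1)).eval a /
      (p.1 ! * p.2 ! * (ascPochhammer K p.1).eval c) =
    (ascPochhammer K n).eval a * (ascPochhammer K n).eval (a - c + 1) /
      (ascPochhammer K n).eval c / n ! := by
  have hsum : a - c + 1 = (a + n) + (1 - c - n) := by ring
  rw [mul_div_right_comm, mul_div_assoc, ← multichoose_eq_ascPochhammer_eval_div, hsum,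
    ← sum_antidiagonal_multichoose_mul, Finset.mul_sum]
  refine Finset.sum_congr rfl fun ⟨k, j⟩ hkj => ?_
  obtain rfl : k + j = n := mem_antidiagonal.mp hkj
  have hreflect := neg_one_pow_mul_multichoose (c + k) j
  rw [show 1 - (c + k) - j = 1 - c - (k + j : ℕ) by push_cast; ring] at hreflect
  rw [← ascPochhammer_eval_mul_eval_add c k j] at hc ⊢
  rw [← hreflect, multichoose_eq_ascPochhammer_eval_div, multichoose_eq_ascPochhammer_eval_div,
    ← ascPochhammer_eval_mul_eval_add a (k + j) k]
  have hk := left_ne_zero_of_mul hc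
  have hj := right_ne_zero_of_mul hc
  field_simp

theorem cast_factorial_two_mul_eq_ascPochhammer (k : ℕ) :
    ((2 * k)! : K) = 4 ^ k * k ! * (ascPochhammer K k).eval (1 / 2) := by
  induction k with
  | zero => simp
  | succ k ih =>
    rw [mul_add_one, Nat.factorial_succ, Nat.factorial_succ, Nat.factorial_succ,
      ascPochhammer_succ_eval]
    push_cast
    rw [ih]
    ring

end Pochhammer

section Beta

theorem Gamma_add_natCast_eq_ascPochhammer {x : ℝ} (hx : 0 < x) (n : ℕ) :
    Gamma (x + n) = (ascPochhammer ℝ n).eval x * Gamma x := by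
  induction n with
  | zero => simp
  | succ n ih =>
    rw [Nat.cast_succ, ← add_assoc, Real.Gamma_add_one (by positivity), ih,
      ascPochhammer_succ_eval]
    ring

theorem betaFn_add_natCast {p q : ℝ} (hp : 0 < p) (hq : 0 < q) (n : ℕ) :
    betaFn p (q + n) = betaFn p q *
      ((ascPochhammer ℝ n).eval q / (ascPochhammer ℝ n).eval (p + q)) := by
  rw [betaFn, betaFn, ← add_assoc, Gamma_add_natCast_eq_ascPochhammer hq,
    Gamma_add_natCast_eq_ascPochhammer (add_pos hp hq)]
  ring

theorem betaFn_pos {p q : ℝ} (hp : 0 < p) (hq : 0 < q) : 0 < betaFn p q :=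
  ProbabilityTheory.beta_pos hp hq

theorem integral_Ioo_rpow_mul_one_sub_rpow {p q : ℝ} (hp : 0 < p) (hq : 0 < q) :
    ∫ x in Ioo (0 : ℝ) 1, x ^ (p - 1) * (1 - x) ^ (q - 1) = betaFn p q := by
  have h : betaFn p q = (Complex.betaIntegral p q).re :=
    ProbabilityTheory.beta_eq_betaIntegralReal p q hp hq
  rw [h, Complex.betaIntegral, intervalIntegral.integral_of_le zero_le_one,
    integral_Ioc_eq_integral_Ioo, ← Complex.ofReal_re (∫ x in Ioo (0 : ℝ) 1, _),
    ← integral_complex_ofReal]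
  congr 1
  refine setIntegral_congr_fun measurableSet_Ioo fun x hx => ?_
  rw [Complex.ofReal_mul, Complex.ofReal_cpow hx.1.le, Complex.ofReal_cpow (by linarith [hx.2])]
  push_cast
  rfl

theorem image_sin_sq_Ioo : (fun t => sin t ^ 2) '' Ioo 0 (π / 2) = Ioo 0 1 := by
  ext x
  constructor
  · rintro ⟨t, ⟨h0, h1⟩, rfl⟩
    have hsin : 0 < sin t := sin_pos_of_pos_of_lt_pi h0 (by linarith [pi_pos])
    have hcos : 0 < cos t := cos_pos_of_mem_Ioo ⟨by linarith [pi_pos], h1⟩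
    exact ⟨by positivity, by nlinarith [sin_sq_add_cos_sq t]⟩
  · rintro ⟨h0, h1⟩
    have hsqrt : √x < 1 := by rwa [sqrt_lt' one_pos, one_pow]
    refine ⟨arcsin √x, ⟨arcsin_pos.mpr (sqrt_pos.mpr h0), arcsin_lt_pi_div_two.mpr hsqrt⟩, ?_⟩
    simp only
    rw [sin_arcsin (by linarith [sqrt_nonneg x]) hsqrt.le, sq_sqrt h0.le]

theorem integral_sin_rpow_mul_cos_rpow {p q : ℝ} (hp : 0 < p) (hq : 0 < q) :
    ∫ t in 0..π / 2, sin t ^ (p - 1) * cos t ^ (q - 1) = betaFn (p / 2) (q / 2) / 2 := by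
  have hderiv : ∀ t ∈ Ioo 0 (π / 2), HasDerivWithinAt (fun t => sin t ^ 2)
      (2 * sin t * cos t) (Ioo 0 (π / 2)) t := fun t _ => by
    simpa using ((hasDerivAt_sin t).fun_pow 2).hasDerivWithinAt
  have hmono : MonotoneOn (fun t => sin t ^ 2) (Ioo 0 (π / 2)) := fun s hs t ht hst => by
    have h0 : 0 ≤ sin s := sin_nonneg_of_nonneg_of_le_pi hs.1.le (by linarith [hs.2, pi_pos])
    have h1 : sin s ≤ sin t :=
      sin_le_sin_of_le_of_le_pi_div_two (by linarith [hs.1, pi_pos]) ht.2.le hst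
    simp only
    gcongr
  have hsubst := integral_image_eq_integral_deriv_smul_of_monotoneOn measurableSet_Ioo hderiv hmono
    fun x => x ^ (p / 2 - 1) * (1 - x) ^ (q / 2 - 1)
  rw [image_sin_sq_Ioo, integral_Ioo_rpow_mul_one_sub_rpow (by positivity) (by positivity)]
    at hsubst
  rw [hsubst, intervalIntegral.integral_of_le (by positivity), integral_Ioc_eq_integral_Ioo,
    ← integral_div]
  refine setIntegral_congr_fun measurableSet_Ioo fun t ht => ?_
  have hsin : 0 < sin t := sin_pos_of_pos_of_lt_pi ht.1 (by linarith [ht.2, pi_pos])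
  have hcos : 0 < cos t := cos_pos_of_mem_Ioo ⟨by linarith [ht.1, pi_pos], ht.2⟩
  have hpow {x s : ℝ} (hx : 0 < x) : x * (x ^ 2) ^ (s / 2 - 1) = x ^ (s - 1) := by
    rw [← rpow_natCast_mul hx.le, mul_comm, ← rpow_add_one hx.ne']
    congr 1
    push_cast
    ring
  simp only [smul_eq_mul]
  rw [← cos_sq', ← hpow hsin, ← hpow hcos]
  ring

theorem intervalIntegrable_sin_rpow {p : ℝ} (hp : 0 < p) :
    IntervalIntegrable (fun t => sin t ^ (p - 1)) volume 0 π := by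
  have hhalf : IntervalIntegrable (fun t => sin t ^ (p - 1)) volume 0 (π / 2) := by
    -- The integral has a nonzero value, so it is not the junk value of a non-integrable function.
    by_contra h
    have hbeta := integral_sin_rpow_mul_cos_rpow hp one_pos
    simp only [sub_self, rpow_zero, mul_one, intervalIntegral.integral_undef h] at hbeta
    have := betaFn_pos (p := p / 2) (q := 1 / 2) (by positivity) (by positivity)
    linarith
  have hreflect := (hhalf.comp_sub_left π).symm
  simp only [sin_pi_sub, sub_zero, sub_half] at hreflect
  exact hhalf.trans hreflect

theorem integral_eq_zero_of_comp_sub_left_eq_neg {f : ℝ → ℝ} {b : ℝ}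
    (hf : ∀ t, f (b - t) = -f t) : ∫ t in 0..b, f t = 0 := by
  have h := intervalIntegral.integral_comp_sub_left f b (a := 0) (b := b)
  simp only [hf, intervalIntegral.integral_neg, sub_self, sub_zero] at h
  linarith

theorem integral_eq_two_mul_of_comp_sub_left_eq {f : ℝ → ℝ} {b : ℝ}
    (hfi : IntervalIntegrable f volume 0 b) (hf : ∀ t, f (b - t) = f t) :
    ∫ t in 0..b, f t = 2 * ∫ t in 0..b / 2, f t := by
  have hmid : b / 2 ∈ uIcc 0 b := by
    rcases le_total 0 b with hb | hb
    · rw [uIcc_of_le hb]; constructor <;> linarith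
    · rw [uIcc_of_ge hb]; constructor <;> linarith
  have h := intervalIntegral.integral_comp_sub_left f b (a := 0) (b := b / 2)
  simp only [hf, sub_zero, sub_half] at h
  rw [← intervalIntegral.integral_add_adjacent_intervals
    (hfi.mono_set (uIcc_subset_uIcc_left hmid)) (hfi.mono_set (uIcc_subset_uIcc_right hmid)), ← h,
    two_mul]

theorem integral_sin_rpow_mul_cos_pow_two_mul {p : ℝ} (hp : 0 < p) (k : ℕ) :
    ∫ t in 0..π, sin t ^ (p - 1) * cos t ^ (2 * k) = betaFn (p / 2) (1 / 2) *
      ((ascPochhammer ℝ k).eval (1 / 2) / (ascPochhammer ℝ k).eval ((1 + p) / 2)) := by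
  have hint : IntervalIntegrable (fun t => sin t ^ (p - 1) * cos t ^ (2 * k)) volume 0 π :=
    (intervalIntegrable_sin_rpow hp).mul_continuousOn (by fun_prop)
  rw [integral_eq_two_mul_of_comp_sub_left_eq hint fun t => by
    rw [sin_pi_sub, cos_pi_sub, (even_two_mul k).neg_pow]]
  have hbeta := integral_sin_rpow_mul_cos_rpow hp (q := 2 * k + 1) (by positivity)
  simp only [add_sub_cancel_right] at hbeta
  rw [show (2 * k + 1 : ℝ) / 2 = 1 / 2 + k by ring,
    betaFn_add_natCast (by positivity) (by positivity), ← add_div, add_comm p] at hbeta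
  simp only [← rpow_natCast, Nat.cast_mul, Nat.cast_ofNat, hbeta]
  ring

end Beta

section Series

theorem hasSum_sum_fiber {M : Type*} [AddCommMonoid M] [TopologicalSpace M] [ContinuousAdd M]
    [RegularSpace M] {β γ : Type*} {f : β → M} {g : β → γ} {s : γ → Finset β} {a : M}
    (hf : HasSum f a) (hs : ∀ c b, b ∈ s c ↔ g b = c) : HasSum (fun c => ∑ b ∈ s c, f b) a := by
  refine ((Equiv.sigmaFiberEquiv g).hasSum_iff.mpr hf).sigma fun c => ?_
  have hset : {b | g b = c} = (s c : Set β) := by ext b; simp [hs]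
  change HasSum (f ∘ ((↑) : {b | g b = c} → β)) _
  rw [hset]
  exact (s c).hasSum f

theorem hasSum_sum_antidiagonal {M : Type*} [AddCommMonoid M] [TopologicalSpace M]
    [ContinuousAdd M] [RegularSpace M] {A : Type*} [AddMonoid A] [Finset.HasAntidiagonal A]
    {f : A × A → M} {a : M} (hf : HasSum f a) :
    HasSum (fun n => ∑ p ∈ antidiagonal n, f p) a :=
  hasSum_sum_fiber hf fun _ _ => mem_antidiagonal

theorem eq_of_eventually_hasSum_mul_pow {𝕜 : Type*} [NontriviallyNormedField 𝕜] [CompleteSpace 𝕜]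
    {c d : ℕ → 𝕜} {f : 𝕜 → 𝕜}
    (hc : ∀ᶠ z in 𝓝 0, HasSum (fun n => c n * z ^ n) (f z))
    (hd : ∀ᶠ z in 𝓝 0, HasSum (fun n => d n * z ^ n) (f z)) : c = d := by
  have hasFPowerSeries {e : ℕ → 𝕜} (he : ∀ᶠ z in 𝓝 0, HasSum (fun n => e n * z ^ n) (f z)) :
      HasFPowerSeriesAt f (FormalMultilinearSeries.ofScalars 𝕜 e) 0 := by
    simpa [hasFPowerSeriesAt_iff, FormalMultilinearSeries.coeff_ofScalars, mul_comm] using he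
  exact FormalMultilinearSeries.ofScalars_series_injective 𝕜 𝕜
    ((hasFPowerSeries hc).eq_formalMultilinearSeries (hasFPowerSeries hd))

theorem sum_antidiagonal_choose_mul_pow_mul_pow {R : Type*} [CommSemiring R] (c : ℕ → R)
    (u v : R) (n : ℕ) :
    ∑ p ∈ antidiagonal n, c (p.1 + p.2) * (p.1 + p.2).choose p.1 * (u ^ p.1 * v ^ p.2) =
      c n * (u + v) ^ n := by
  rw [(Commute.all u v).add_pow', Finset.mul_sum]
  refine Finset.sum_congr rfl fun p hp => ?_
  rw [mem_antidiagonal.mp hp, nsmul_eq_mul, mul_assoc]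

theorem hasSum_choose_mul_pow_mul_pow {𝕜 : Type*} [RCLike 𝕜] {c : ℕ → 𝕜} {u v s : 𝕜}
    (hc : Summable fun n => ‖c n‖ * (‖u‖ + ‖v‖) ^ n)
    (hs : HasSum (fun n => c n * (u + v) ^ n) s) :
    HasSum (fun p : ℕ × ℕ => c (p.1 + p.2) * (p.1 + p.2).choose p.1 * (u ^ p.1 * v ^ p.2)) s := by
  have habs : Summable fun p : ℕ × ℕ =>
      ‖c (p.1 + p.2)‖ * (p.1 + p.2).choose p.1 * (‖u‖ ^ p.1 * ‖v‖ ^ p.2) := by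
    rw [← Finset.HasAntidiagonal.sigmaAntidiagonalEquivProd.summable_iff]
    refine (summable_sigma_of_nonneg fun p => by dsimp; positivity).mpr
      ⟨fun n => Summable.of_finite, hc.congr fun n => ?_⟩
    rw [← sum_antidiagonal_choose_mul_pow_mul_pow (fun n => ‖c n‖)]
    exact ((antidiagonal n).tsum_subtype _).symm
  have hsum : Summable fun p : ℕ × ℕ =>
      c (p.1 + p.2) * (p.1 + p.2).choose p.1 * (u ^ p.1 * v ^ p.2) :=
    habs.of_norm_bounded fun p => by simp
  have hdiag := hasSum_sum_antidiagonal hsum.hasSum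
  simp only [sum_antidiagonal_choose_mul_pow_mul_pow] at hdiag
  exact hdiag.unique hs ▸ hsum.hasSum

theorem hasSum_one_sub_rpow_neg (a : ℝ) {x : ℝ} (hx : |x| < 1) :
    HasSum (fun n => Ring.multichoose a n * x ^ n) ((1 - x) ^ (-a)) := by
  have h := (Real.one_div_one_sub_rpow_hasFPowerSeriesOnBall_zero a).hasSum (y := x)
    (by simpa [enorm_eq_nnnorm, ← NNReal.coe_lt_coe] using hx)
  have hx1 : 0 ≤ 1 - x := by linarith [le_abs_self x]
  simpa [rpow_neg hx1, Ring.multichoose_eq, mul_comm] using h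

theorem hasSum_one_sub_cpow_neg (a : ℂ) {z : ℂ} (hz : ‖z‖ < 1) :
    HasSum (fun n => Ring.multichoose a n * z ^ n) ((1 - z) ^ (-a)) := by
  have h := (Complex.one_div_one_sub_cpow_hasFPowerSeriesOnBall_zero a).hasSum (y := z)
    (by simpa [enorm_eq_nnnorm, ← NNReal.coe_lt_coe] using hz)
  simpa [Complex.cpow_neg, Ring.multichoose_eq, mul_comm] using h

end Series

section Gegenbauer

/-- The Gegenbauer polynomial `C_n^(a)(x)`, the coefficient of `r ^ n` in
`(1 + r ^ 2 - 2 * r * x) ^ (-a)`. It is encoded by its explicit sum (DLMF 18.5.10), which makes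
sense for every real `a`. -/
noncomputable def gegenbauer (a : ℝ) (n : ℕ) (x : ℝ) : ℝ :=
  ∑ j ∈ Finset.range (n / 2 + 1),
    (-1) ^ j * (ascPochhammer ℝ (n - j)).eval a / (j ! * (n - 2 * j)!) * (2 * x) ^ (n - 2 * j)

theorem continuous_gegenbauer (a : ℝ) (n : ℕ) : Continuous (gegenbauer a n) := by
  unfold gegenbauer
  fun_prop

theorem gegenbauer_neg (a : ℝ) (n : ℕ) (x : ℝ) :
    gegenbauer a n (-x) = (-1) ^ n * gegenbauer a n x := by
  rw [gegenbauer, gegenbauer, Finset.mul_sum]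
  refine Finset.sum_congr rfl fun j hj => ?_
  have hjn : 2 * j ≤ n := by
    have := Finset.mem_range.mp hj
    omega
  have hsign : (-1 : ℝ) ^ n = (-1) ^ (n - 2 * j) := by
    rw [← Nat.sub_add_cancel hjn, pow_add, pow_mul, neg_one_sq, one_pow, mul_one,
      Nat.add_sub_cancel]
  rw [mul_neg, neg_pow (2 * x), hsign, mul_left_comm]

theorem mem_image_range_sub_two_mul {n : ℕ} {p : ℕ × ℕ} :
    p ∈ (Finset.range (n / 2 + 1)).image (fun j => (n - 2 * j, j)) ↔ p.1 + 2 * p.2 = n := by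
  rcases p with ⟨i, j⟩
  simp only [Finset.mem_image, Finset.mem_range, Prod.mk.injEq]
  constructor
  · rintro ⟨k, hk, rfl, rfl⟩
    omega
  · rintro rfl
    exact ⟨j, by omega, by omega, rfl⟩

theorem gegenbauer_mul_pow (a : ℝ) (n : ℕ) (x r : ℝ) :
    gegenbauer a n x * r ^ n =
      ∑ p ∈ (Finset.range (n / 2 + 1)).image (fun j => (n - 2 * j, j)),
        Ring.multichoose a (p.1 + p.2) * (p.1 + p.2).choose p.1 *
          ((2 * r * x) ^ p.1 * (-r ^ 2) ^ p.2) := by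
  rw [gegenbauer, Finset.sum_mul, Finset.sum_image fun _ _ _ _ h => congrArg Prod.snd h]
  refine Finset.sum_congr rfl fun j hj => ?_
  have hjn : 2 * j ≤ n := by
    have := Finset.mem_range.mp hj
    omega
  obtain ⟨i, rfl⟩ := Nat.exists_eq_add_of_le' hjn
  rw [show i + 2 * j - j = i + j by omega, Nat.add_sub_cancel, Nat.cast_add_choose,
    multichoose_eq_ascPochhammer_eval_div]
  field_simp
  ring

theorem hasSum_gegenbauer_mul_pow_of_lt (a : ℝ) {x r : ℝ} (hr : |2 * r * x| + r ^ 2 < 1) :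
    HasSum (fun n => gegenbauer a n x * r ^ n) ((1 + r ^ 2 - 2 * r * x) ^ (-a)) := by
  have hr' : |2 * r * x| + |-r ^ 2| < 1 := by rwa [abs_neg, abs_of_nonneg (sq_nonneg r)]
  have hnonneg : 0 ≤ |2 * r * x| + |-r ^ 2| := by positivity
  have hbinomial := hasSum_one_sub_rpow_neg a ((abs_add_le _ _).trans_lt hr')
  have hmajorant := (hasSum_one_sub_rpow_neg a (x := |2 * r * x| + |-r ^ 2|)
    (by rwa [abs_of_nonneg hnonneg])).summable.norm
  simp only [norm_mul, norm_pow, norm_of_nonneg hnonneg] at hmajorant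
  rw [show 1 + r ^ 2 - 2 * r * x = 1 - (2 * r * x + -r ^ 2) by ring]
  simp only [gegenbauer_mul_pow]
  exact hasSum_sum_fiber (hasSum_choose_mul_pow_mul_pow hmajorant hbinomial)
    fun _ _ => mem_image_range_sub_two_mul

theorem norm_one_sub_mul_exp_sq (r t : ℝ) :
    ‖1 - (r : ℂ) * Complex.exp (t * Complex.I)‖ ^ 2 = 1 + r ^ 2 - 2 * r * cos t := by
  rw [← Complex.normSq_eq_norm_sq, Complex.normSq_sub]
  simp [Complex.normSq_eq_norm_sq, Complex.norm_exp_ofReal_mul_I, ← Complex.exp_conj,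
    Complex.exp_re, mul_assoc]

theorem one_add_sq_sub_two_mul_mul_cos_nonneg (r t : ℝ) : 0 ≤ 1 + r ^ 2 - 2 * r * cos t := by
  rw [← norm_one_sub_mul_exp_sq]
  positivity

theorem re_cpow_mul_conj (w : ℂ) (a : ℝ) :
    (w ^ (a : ℂ) * starRingEnd ℂ (w ^ (a : ℂ))).re = (‖w‖ ^ 2) ^ a := by
  rw [Complex.mul_conj, Complex.ofReal_re, Complex.normSq_eq_norm_sq, Complex.norm_cpow_real,
    ← rpow_mul_natCast (norm_nonneg _), mul_comm, rpow_natCast_mul (norm_nonneg _)]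

theorem re_mul_exp_pow_mul_conj (r t : ℝ) (m n : ℕ) :
    (((r : ℂ) * Complex.exp (t * Complex.I)) ^ m *
      starRingEnd ℂ (((r : ℂ) * Complex.exp (t * Complex.I)) ^ n)).re =
      cos ((m - n) * t) * r ^ (m + n) := by
  have h : ((r : ℂ) * Complex.exp (t * Complex.I)) ^ m *
      starRingEnd ℂ (((r : ℂ) * Complex.exp (t * Complex.I)) ^ n) =
      ((r ^ (m + n) : ℝ) : ℂ) * Complex.exp (((m - n) * t : ℝ) * Complex.I) := by
    rw [map_pow, map_mul, Complex.conj_ofReal, ← Complex.exp_conj, mul_pow,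
      mul_pow, ← Complex.exp_nat_mul, ← Complex.exp_nat_mul, map_mul, Complex.conj_ofReal,
      Complex.conj_I, mul_mul_mul_comm, ← Complex.exp_add, ← pow_add, Complex.ofReal_pow]
    congr 2
    push_cast
    ring
  rw [h, Complex.re_ofReal_mul, Complex.exp_ofReal_mul_I_re, mul_comm]

theorem hasSum_multichoose_mul_cos_mul_pow (a : ℝ) {r : ℝ} (hr : |r| < 1) (t : ℝ) :
    HasSum (fun p : ℕ × ℕ => Ring.multichoose a p.1 * Ring.multichoose a p.2 *
      cos ((p.1 - p.2) * t) * r ^ (p.1 + p.2)) ((1 + r ^ 2 - 2 * r * cos t) ^ (-a)) := by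
  have hnorm : ‖(r : ℂ) * Complex.exp (t * Complex.I)‖ < 1 := by
    simpa [Complex.norm_exp_ofReal_mul_I] using hr
  have hseries := hasSum_one_sub_cpow_neg a hnorm
  have hconj := Complex.hasSum_conj'.mpr hseries
  have hsummable := summable_mul_of_summable_norm hseries.summable.norm hconj.summable.norm
  have hprod := Complex.hasSum_re (hseries.mul hconj hsummable)
  rw [← Complex.ofReal_neg, re_cpow_mul_conj, norm_one_sub_mul_exp_sq] at hprod
  convert hprod using 2 with p
  have hcoe (n : ℕ) : Ring.multichoose (a : ℂ) n = (Ring.multichoose a n : ℝ) :=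
    (Ring.map_multichoose Complex.ofRealHom a n).symm
  rw [hcoe, hcoe, map_mul, Complex.conj_ofReal, mul_mul_mul_comm, ← Complex.ofReal_mul,
    Complex.re_ofReal_mul, re_mul_exp_pow_mul_conj, mul_assoc]

theorem hasSum_sum_antidiagonal_multichoose_mul_cos_mul_pow (a : ℝ) {r : ℝ} (hr : |r| < 1)
    (t : ℝ) :
    HasSum (fun n => (∑ p ∈ antidiagonal n, Ring.multichoose a p.1 * Ring.multichoose a p.2 *
      cos ((p.1 - p.2) * t)) * r ^ n) ((1 + r ^ 2 - 2 * r * cos t) ^ (-a)) := by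
  convert hasSum_sum_antidiagonal (hasSum_multichoose_mul_cos_mul_pow a hr t) using 2 with n
  rw [Finset.sum_mul]
  exact Finset.sum_congr rfl fun p hp => by rw [mem_antidiagonal.mp hp]

theorem gegenbauer_cos (a : ℝ) (n : ℕ) (t : ℝ) :
    gegenbauer a n (cos t) = ∑ p ∈ antidiagonal n,
      Ring.multichoose a p.1 * Ring.multichoose a p.2 * cos ((p.1 - p.2) * t) := by
  have hgegenbauer : ∀ᶠ r in 𝓝 0, HasSum (fun n => gegenbauer a n (cos t) * r ^ n)
      ((1 + r ^ 2 - 2 * r * cos t) ^ (-a)) := by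
    have hcont : Continuous fun r : ℝ => |2 * r * cos t| + r ^ 2 := by fun_prop
    filter_upwards [hcont.continuousAt.eventually_lt
      (continuousAt_const (y := 1)) (by simp)] with r hr
    exact hasSum_gegenbauer_mul_pow_of_lt a hr
  have hfourier : ∀ᶠ r : ℝ in 𝓝 0, |r| < 1 :=
    continuous_abs.continuousAt.eventually_lt (continuousAt_const (y := 1)) (by simp)
  exact congrFun (eq_of_eventually_hasSum_mul_pow hgegenbauer (hfourier.mono fun r hr =>
    hasSum_sum_antidiagonal_multichoose_mul_cos_mul_pow a hr t)) n

theorem hasSum_gegenbauer_cos_mul_pow (a : ℝ) {r : ℝ} (hr : |r| < 1) (t : ℝ) :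
    HasSum (fun n => gegenbauer a n (cos t) * r ^ n) ((1 + r ^ 2 - 2 * r * cos t) ^ (-a)) := by
  simp only [gegenbauer_cos]
  exact hasSum_sum_antidiagonal_multichoose_mul_cos_mul_pow a hr t

theorem abs_gegenbauer_cos_mul_pow_le (a r : ℝ) (n : ℕ) (t : ℝ) :
    |gegenbauer a n (cos t) * r ^ n| ≤ ∑ p ∈ antidiagonal n,
      |Ring.multichoose a p.1 * r ^ p.1| * |Ring.multichoose a p.2 * r ^ p.2| := by
  rw [gegenbauer_cos, Finset.sum_mul]
  refine (Finset.abs_sum_le_sum_abs _ _).trans (Finset.sum_le_sum fun p hp => ?_)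
  rw [← mem_antidiagonal.mp hp, pow_add, ← abs_mul, mul_right_comm, abs_mul,
    mul_mul_mul_comm]
  exact mul_le_of_le_one_right (abs_nonneg _) (abs_cos_le_one _)

theorem hasSum_integral_mul_gegenbauer_cos_mul_pow {w : ℝ → ℝ} {b c : ℝ}
    (hw : IntervalIntegrable w volume b c) (a : ℝ) {r : ℝ} (hr : |r| < 1) :
    HasSum (fun n => (∫ t in b..c, w t * gegenbauer a n (cos t)) * r ^ n)
      (∫ t in b..c, w t * (1 + r ^ 2 - 2 * r * cos t) ^ (-a)) := by
  simp only [← intervalIntegral.integral_mul_const, mul_assoc (w _)]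
  have hsum := (hasSum_one_sub_rpow_neg a hr).summable.abs.norm
  have hbound : Summable fun n => ∑ p ∈ antidiagonal n,
      |Ring.multichoose a p.1 * r ^ p.1| * |Ring.multichoose a p.2 * r ^ p.2| :=
    (summable_norm_sum_mul_antidiagonal_of_summable_norm hsum hsum).of_norm
  refine intervalIntegral.hasSum_integral_of_dominated_convergence
    (fun n t => |w t| * ∑ p ∈ antidiagonal n,
      |Ring.multichoose a p.1 * r ^ p.1| * |Ring.multichoose a p.2 * r ^ p.2|)
    (fun n => ?_) (fun n => .of_forall fun t _ => ?_)
    (.of_forall fun t _ => hbound.mul_left _) ?_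
    (.of_forall fun t _ => (hasSum_gegenbauer_cos_mul_pow a hr t).mul_left _)
  · exact hw.def'.aestronglyMeasurable.mul
      (((continuous_gegenbauer a n).comp continuous_cos).mul continuous_const).aestronglyMeasurable
  · rw [norm_mul]
    exact mul_le_mul_of_nonneg_left (abs_gegenbauer_cos_mul_pow_le a r n t) (norm_nonneg _)
  · simp only [tsum_mul_left]
    exact hw.abs.mul_const _

theorem integral_sin_rpow_mul_gegenbauer_cos_of_odd (p a : ℝ) {n : ℕ} (hn : Odd n) :
    ∫ t in 0..π, sin t ^ (p - 1) * gegenbauer a n (cos t) = 0 :=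
  integral_eq_zero_of_comp_sub_left_eq_neg fun t => by
    rw [sin_pi_sub, cos_pi_sub, gegenbauer_neg, hn.neg_one_pow, neg_one_mul, mul_neg]

theorem gegenbauer_two_mul (a : ℝ) (n : ℕ) (x : ℝ) :
    gegenbauer a (2 * n) x = ∑ q ∈ antidiagonal n,
      (-1) ^ q.2 * (ascPochhammer ℝ (n + q.1)).eval a /
        (q.1 ! * q.2 ! * (ascPochhammer ℝ q.1).eval (1 / 2)) * x ^ (2 * q.1) := by
  rw [← Finset.Nat.sum_antidiagonal_swap, Finset.Nat.sum_antidiagonal_eq_sum_range_succ_mk,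
    gegenbauer, Nat.mul_div_cancel_left n two_pos]
  refine Finset.sum_congr rfl fun j hj => ?_
  have hjn : j ≤ n := Finset.mem_range_succ_iff.mp hj
  obtain ⟨i, rfl⟩ := Nat.exists_eq_add_of_le' hjn
  rw [show 2 * (i + j) - 2 * j = 2 * i by omega, show 2 * (i + j) - j = i + j + i by omega,
    cast_factorial_two_mul_eq_ascPochhammer, mul_pow, pow_mul 2]
  simp only [Prod.swap, Nat.add_sub_cancel]
  have hhalf := (ascPochhammer_pos i (1 / 2 : ℝ) (by norm_num)).ne'
  norm_num
  field_simp

theorem integral_sin_rpow_mul_gegenbauer_cos_two_mul {p : ℝ} (hp : 0 < p) (a : ℝ) (n : ℕ) :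
    ∫ t in 0..π, sin t ^ (p - 1) * gegenbauer a (2 * n) (cos t) = betaFn (p / 2) (1 / 2) *
      ((ascPochhammer ℝ n).eval a * (ascPochhammer ℝ n).eval (a + (1 - p) / 2) /
        (ascPochhammer ℝ n).eval ((1 + p) / 2) / n !) := by
  have hpos (k : ℕ) : 0 < (ascPochhammer ℝ k).eval ((1 + p) / 2) :=
    ascPochhammer_pos k _ (by positivity)
  have hchu := sum_antidiagonal_neg_one_pow_mul_ascPochhammer a (hpos n).ne'
  rw [show a - (1 + p) / 2 + 1 = a + (1 - p) / 2 by ring] at hchu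
  simp only [gegenbauer_two_mul, Finset.mul_sum, mul_left_comm (sin _ ^ (p - 1))]
  rw [← hchu, Finset.mul_sum, intervalIntegral.integral_finsetSum fun q _ =>
    ((intervalIntegrable_sin_rpow hp).mul_continuousOn (by fun_prop)).const_mul _]
  refine Finset.sum_congr rfl fun q _ => ?_
  have hhalf := (ascPochhammer_pos q.1 (1 / 2 : ℝ) (by norm_num)).ne'
  have hq := (hpos q.1).ne'
  rw [intervalIntegral.integral_const_mul, integral_sin_rpow_mul_cos_pow_two_mul hp]
  field_simp

theorem hasSum_integral_sin_rpow_mul_rpow_neg {p : ℝ} (hp : 0 < p) (a : ℝ) {r : ℝ}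
    (hr : |r| < 1) :
    HasSum (fun n => betaFn (p / 2) (1 / 2) *
      ((ascPochhammer ℝ n).eval a * (ascPochhammer ℝ n).eval (a + (1 - p) / 2) /
        (ascPochhammer ℝ n).eval ((1 + p) / 2) / n !) * r ^ (2 * n))
      (∫ t in 0..π, sin t ^ (p - 1) * (1 + r ^ 2 - 2 * r * cos t) ^ (-a)) := by
  have h := hasSum_integral_mul_gegenbauer_cos_mul_pow (intervalIntegrable_sin_rpow hp) a hr
  rw [← (mul_right_injective₀ two_ne_zero).hasSum_iff] at h
  · simpa only [Function.comp_def, integral_sin_rpow_mul_gegenbauer_cos_two_mul hp] using h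
  · intro n hn
    have hodd : Odd n := by
      rw [← Nat.not_even_iff_odd, even_iff_two_dvd]
      exact fun ⟨k, hk⟩ => hn ⟨k, hk.symm⟩
    rw [integral_sin_rpow_mul_gegenbauer_cos_of_odd p a hodd, zero_mul]

end Gegenbauer

theorem integral_sin_pow_div_eq_beta_mul_hyperF_general {l₁ r : ℝ} (h₁ : 0 < l₁) (l₂ : ℝ)
    (hr : |r| < 1) :
    ∫ t in (0:ℝ)..π, (sin t) ^ (l₁ - 1) / (1 + r ^ 2 - 2 * r * cos t) ^ l₂ =
      betaFn (l₁ / 2) (1 / 2) *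
        hyperF l₂ (l₂ + (1 - l₁) / 2) ((1 + l₁) / 2) (r ^ 2) := by
  simp only [div_eq_mul_inv (sin _ ^ (l₁ - 1)),
    ← rpow_neg (one_add_sq_sub_two_mul_mul_cos_nonneg r _)]
  rw [← (hasSum_integral_sin_rpow_mul_rpow_neg h₁ l₂ hr).tsum_eq, hyperF, ← tsum_mul_left]
  refine tsum_congr fun n => ?_
  rw [pow_mul]
  ring

theorem integral_sin_pow_div_eq_beta_mul_hyperF
    (l₁ l₂ r : ℝ) (h₁ : 1 < l₁) (h₂ : 0 < l₂) (hr : r ∈ Ico (0:ℝ) 1) :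
    ∫ t in (0:ℝ)..π, (sin t) ^ (l₁ - 1) / (1 + r ^ 2 - 2 * r * cos t) ^ l₂ =
      betaFn (l₁ / 2) (1 / 2) *
        hyperF l₂ (l₂ + (1 - l₁) / 2) ((1 + l₁) / 2) (r ^ 2) :=
  integral_sin_pow_div_eq_beta_mul_hyperF_general (one_pos.trans h₁) l₂
    ((abs_of_nonneg hr.1).trans_lt hr.2)
end

section
/- Let n ≥ 3, m ≥ 1, and let F : B^n → R^m be a bounded harmonic mapping given as the Poisson integral F(x) = ∫_{S^{n−1}} P(x,ζ) ψ(ζ) dσ(ζ) of a bounded measurable ψ : S^{n−1} → R^m with |ψ| ≤ ‖F‖_∞ a.e. Then for all x ∈ B^n, |F(x) − ((1−|x|)/(1+|x|)^{n−1}) F(0)| ≤ ‖F‖_∞ (1 − (1−|x|)/(1+|x|)^{n−1}). -/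
open Metric MeasureTheory

/-- The normalized (total mass one) surface measure on the unit sphere of `ℝⁿ`. -/
noncomputable def sphereMeasureNormalized (n : ℕ) :
    Measure (sphere (0 : EuclideanSpace ℝ (Fin n)) 1) :=
  ((volume : Measure (EuclideanSpace ℝ (Fin n))).toSphere Set.univ)⁻¹ •
    (volume : Measure (EuclideanSpace ℝ (Fin n))).toSphere

/-- The Poisson kernel `P(x,ζ) = (1-|x|²)/|x-ζ|ⁿ` of the unit ball `Bⁿ`. -/
noncomputable def poissonKer (n : ℕ) (x ζ : EuclideanSpace ℝ (Fin n)) : ℝ :=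
  (1 - ‖x‖ ^ 2) / ‖x - ζ‖ ^ n

/-!
Write `T y = y - ‖y‖ x`, a positively homogeneous bijection of `E` with `‖T ζ‖ = ‖x - ζ‖` on the
unit sphere. In polar coordinates `∫ ‖x - ζ‖⁻ⁿ dζ = n · |{‖T y‖ < 1}|`. The Jacobian of `T` is
`1 - ⟪x, y⟫ / ‖y‖`, and the Jacobian of `T⁻¹` times `1 - ‖x‖²` is `1` plus an odd function, so
`(1 - ‖x‖²) · |{‖T y‖ < 1}| = |B|`: the Poisson kernel has mass one. Subtracting from the kernel its
minimum `c` over the sphere leaves a nonnegative kernel of mass `1 - c`, and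
`F x - c F 0` is the integral of `ψ` against it.
-/

open Module Set

theorem norm_sub_pos_of_norm_lt {E : Type*} [NormedAddCommGroup E] {x y : E} (h : ‖x‖ < ‖y‖) :
    0 < ‖x - y‖ :=
  norm_sub_pos_iff.2 (ne_of_apply_ne norm h.ne)

theorem real_inner_lt_norm_of_norm_lt_one {E : Type*} [NormedAddCommGroup E]
    [InnerProductSpace ℝ E] {x y : E} (hx : ‖x‖ < 1) (hy : y ≠ 0) : inner ℝ x y < ‖y‖ :=
  (real_inner_le_norm x y).trans_lt (mul_lt_of_lt_one_left (norm_pos_iff.2 hy) hx)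

theorem det_id_add_smulRight {R V : Type*} [CommRing R] [TopologicalSpace R] [AddCommGroup V]
    [TopologicalSpace V] [IsTopologicalAddGroup V] [Module R V] [ContinuousSMul R V]
    [Module.Free R V] [Module.Finite R V] (f : V →L[R] R) (v : V) :
    (ContinuousLinearMap.id R V + f.smulRight v).det = 1 + f v :=
  LinearMap.transvection.det f.toLinearMap v

section Integral

variable {G : Type*} [NormedAddCommGroup G] [NormedSpace ℝ G]

theorem norm_integral_smul_sub_smul_integral_le {Ω : Type*} [MeasurableSpace Ω] {σ : Measure Ω}
    [IsProbabilityMeasure σ] {K : Ω → ℝ} {ψ : Ω → G} {c M : ℝ} (hK : Integrable K σ)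
    (hcK : ∀ᵐ ζ ∂σ, c ≤ K ζ) (hψ : AEStronglyMeasurable ψ σ) (hM : ∀ᵐ ζ ∂σ, ‖ψ ζ‖ ≤ M) :
    ‖∫ ζ, K ζ • ψ ζ ∂σ - c • ∫ ζ, ψ ζ ∂σ‖ ≤ M * (∫ ζ, K ζ ∂σ - c) := by
  have hψint : Integrable ψ σ := .of_bound hψ M hM
  calc ‖∫ ζ, K ζ • ψ ζ ∂σ - c • ∫ ζ, ψ ζ ∂σ‖
      = ‖∫ ζ, (K ζ - c) • ψ ζ ∂σ‖ := by
        have hKψ : Integrable (fun ζ ↦ K ζ • ψ ζ) σ := hK.smul_bdd M hψ hM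
        simp_rw [sub_smul]
        rw [integral_sub hKψ (hψint.fun_smul c), integral_smul]
    _ ≤ ∫ ζ, M * (K ζ - c) ∂σ := by
        refine norm_integral_le_of_norm_le ((hK.sub (integrable_const c)).const_mul M) ?_
        filter_upwards [hcK, hM] with ζ hcζ hMζ
        rw [norm_smul, Real.norm_of_nonneg (sub_nonneg.2 hcζ), mul_comm]
        exact mul_le_mul_of_nonneg_right hMζ (sub_nonneg.2 hcζ)
    _ = M * (∫ ζ, K ζ ∂σ - c) := by
        simp [integral_const_mul, integral_sub hK (integrable_const c)]

theorem setIntegral_eq_zero_of_odd {A : Type*} [InvolutiveNeg A] [MeasurableSpace A]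
    [MeasurableNeg A] {μ : Measure A} [μ.IsNegInvariant] {f : A → G} (hf : f.Odd) {s : Set A}
    (hs : Neg.neg ⁻¹' s = s) : ∫ y in s, f y ∂μ = 0 := by
  have h := (Measure.measurePreserving_neg μ).setIntegral_preimage_emb
    (MeasurableEquiv.neg A).measurableEmbedding f s
  simp_rw [hs, hf _, integral_neg] at h
  have := IsAddTorsionFree.of_isTorsionFree ℝ G
  exact neg_eq_self.1 h

end Integral

section PolarCoordinates

variable {E : Type*} [NormedAddCommGroup E] [NormedSpace ℝ E] [FiniteDimensional ℝ E]
  [MeasurableSpace E] [BorelSpace E] (μ : Measure E) [μ.IsAddHaarMeasure] {g : E → ℝ}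

theorem lintegral_toSphere_inv_pow_finrank (hg : Measurable g)
    (hsmul : ∀ t : ℝ, 0 < t → ∀ y, g (t • y) = t * g y) (hpos : ∀ y, y ≠ 0 → 0 < g y) :
    ∫⁻ ζ : sphere (0 : E) 1, ENNReal.ofReal (g ζ ^ finrank ℝ E)⁻¹ ∂μ.toSphere =
      finrank ℝ E * μ {y | g y < 1} := by
  nontriviality E
  have hd : finrank ℝ E - 1 + 1 = finrank ℝ E := Nat.sub_add_cancel finrank_pos
  have hcast : ((finrank ℝ E - 1 : ℕ) : ℝ) + 1 = finrank ℝ E := by exact_mod_cast hd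
  have hd0 : (0 : ℝ) < finrank ℝ E := by exact_mod_cast finrank_pos
  set S : Set (sphere (0 : E) 1 × Ioi (0 : ℝ)) := {p | p.2.1 * g p.1 < 1}
  have hS : MeasurableSet S := measurableSet_lt (by fun_prop) measurable_const
  have hpolar : μ {y | g y < 1} =
      (μ.toSphere.prod (Measure.volumeIoiPow (finrank ℝ E - 1))) S := by
    have hpre : homeomorphUnitSphereProd E ⁻¹' S =
        ((↑) : ({0}ᶜ : Set E) → E) ⁻¹' {y | g y < 1} := by
      ext ⟨y, hy⟩
      have hy' : 0 < ‖y‖ := norm_pos_iff.2 hy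
      simp [S, ← hsmul _ hy', smul_inv_smul₀ hy'.ne']
    rw [← μ.measurePreserving_homeomorphUnitSphereProd.measure_preimage hS.nullMeasurableSet,
      hpre, comap_subtype_coe_apply (measurableSet_singleton _).compl,
      Subtype.image_preimage_coe, inter_comm, ← sdiff_eq, measure_sdiff_null (measure_singleton 0)]
  rw [hpolar, Measure.prod_apply hS, ← lintegral_const_mul _ (measurable_measure_prodMk_left hS)]
  refine lintegral_congr fun ζ ↦ ?_
  have hgζ : 0 < g ζ := hpos ζ (ne_zero_of_mem_unit_sphere ζ)
  have hray : Prod.mk ζ ⁻¹' S = Iio ⟨(g ζ)⁻¹, inv_pos.2 hgζ⟩ := by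
    ext t
    simp [S, ← Subtype.coe_lt_coe, ← one_div, lt_div_iff₀ hgζ]
  rw [hray, Measure.volumeIoiPow_apply_Iio, hd, hcast, ← ENNReal.ofReal_natCast,
    ← ENNReal.ofReal_mul hd0.le, mul_div_cancel₀ _ hd0.ne', inv_pow]

theorem integral_toSphere_inv_pow_finrank (hg : Measurable g)
    (hsmul : ∀ t : ℝ, 0 < t → ∀ y, g (t • y) = t * g y) (hpos : ∀ y, y ≠ 0 → 0 < g y) :
    ∫ ζ : sphere (0 : E) 1, (g ζ ^ finrank ℝ E)⁻¹ ∂μ.toSphere =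
      finrank ℝ E * μ.real {y | g y < 1} := by
  have hnonneg (ζ : sphere (0 : E) 1) : 0 ≤ (g ζ ^ finrank ℝ E)⁻¹ :=
    inv_nonneg.2 (pow_nonneg (hpos ζ (ne_zero_of_mem_unit_sphere ζ)).le _)
  have hmeas : Measurable fun ζ : sphere (0 : E) 1 ↦ (g ζ ^ finrank ℝ E)⁻¹ := by fun_prop
  rw [integral_eq_lintegral_of_nonneg_ae (.of_forall hnonneg) hmeas.aestronglyMeasurable,
    lintegral_toSphere_inv_pow_finrank μ hg hsmul hpos]
  simp [measureReal_def]

end PolarCoordinates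

/-- The positively homogeneous map `y ↦ y - ‖y‖ x`. It turns the distance `‖x - ζ‖` from a point `ζ`
of the unit sphere into the gauge `y ↦ ‖y - ‖y‖ x‖`, to which polar coordinates apply. -/
def radialShift {E : Type*} [NormedAddCommGroup E] [NormedSpace ℝ E] (x y : E) : E :=
  y - ‖y‖ • x

namespace radialShift

section NormedSpace

variable {E : Type*} [NormedAddCommGroup E] [NormedSpace ℝ E] {x : E}

protected theorem continuous (x : E) : Continuous (radialShift x) := by
  unfold radialShift
  fun_prop

@[simp]
theorem apply_zero (x : E) : radialShift x 0 = 0 := by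
  simp [radialShift]

theorem apply_smul {t : ℝ} (ht : 0 ≤ t) (x y : E) :
    radialShift x (t • y) = t • radialShift x y := by
  simp [radialShift, norm_smul, abs_of_nonneg ht, smul_sub, mul_smul]

theorem norm_apply_of_norm_eq_one (x : E) {ζ : E} (hζ : ‖ζ‖ = 1) :
    ‖radialShift x ζ‖ = ‖x - ζ‖ := by
  rw [radialShift, hζ, one_smul, norm_sub_rev]

theorem bijective [CompleteSpace E] (hx : ‖x‖ < 1) : Function.Bijective (radialShift x) := by
  refine (Function.bijective_iff_existsUnique _).2 fun w ↦ ?_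
  have hcontr : ContractingWith ‖x‖₊ fun y ↦ w + ‖y‖ • x := by
    refine ⟨hx, .of_dist_le_mul fun y z ↦ ?_⟩
    rw [dist_add_left, dist_eq_norm, ← sub_smul, norm_smul, mul_comm, dist_eq_norm, coe_nnnorm]
    gcongr
    exact abs_norm_sub_norm_le y z
  have hfix (y : E) : radialShift x y = w ↔ Function.IsFixedPt (fun y ↦ w + ‖y‖ • x) y := by
    rw [radialShift, sub_eq_iff_eq_add, eq_comm, Function.IsFixedPt]
  exact ⟨_, (hfix _).2 hcontr.fixedPoint_isFixedPt,
    fun y hy ↦ hcontr.fixedPoint_unique ((hfix y).1 hy)⟩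

theorem eq_zero_iff [CompleteSpace E] (hx : ‖x‖ < 1) {y : E} : radialShift x y = 0 ↔ y = 0 :=
  (bijective hx).1.eq_iff' (apply_zero x)

end NormedSpace

section InnerProductSpace

variable {E : Type*} [NormedAddCommGroup E] [InnerProductSpace ℝ E] {x : E}

protected theorem hasFDerivAt (x : E) {y : E} (hy : y ≠ 0) :
    HasFDerivAt (radialShift x)
      (ContinuousLinearMap.id ℝ E + (-(‖y‖⁻¹ • innerSL ℝ y)).smulRight x) y := by
  have hnorm : HasFDerivAt (fun z : E ↦ ‖z‖) (‖y‖⁻¹ • innerSL ℝ y) y := by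
    have h := (hasStrictFDerivAt_norm_sq y).hasFDerivAt.sqrt (pow_ne_zero 2 (norm_ne_zero_iff.2 hy))
    simp only [Real.sqrt_sq (norm_nonneg _)] at h
    refine h.congr_fderiv ?_
    ext v
    simp only [one_div, mul_inv_rev, smul_apply, coe_innerSL_apply,
      nsmul_eq_mul, Nat.cast_ofNat, smul_eq_mul]
    field_simp
  refine ((hasFDerivAt_id y).sub (hnorm.smul_const x)).congr_fderiv ?_
  ext v
  simp [sub_eq_add_neg]

/-- The odd part of the Jacobian of the inverse of `radialShift x`, times `1 - ‖x‖²`: see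
`one_sub_inner_div_mul_one_add_oddDensity`. The formula is found by solving `w = y - ‖y‖ x` for
`‖y‖`, the positive root of `(1 - ‖x‖²) s² - 2 ⟪x, w⟫ s - ‖w‖² = 0`. -/
noncomputable def oddDensity (x w : E) : ℝ :=
  inner ℝ x w / √(inner ℝ x w ^ 2 + (1 - ‖x‖ ^ 2) * ‖w‖ ^ 2)

theorem odd_oddDensity (x : E) : (oddDensity x).Odd := fun w ↦ by
  simp [oddDensity, inner_neg_right, neg_div]

theorem abs_oddDensity_le_one (hx : ‖x‖ ≤ 1) (w : E) : |oddDensity x w| ≤ 1 := by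
  have hnonneg : 0 ≤ (1 - ‖x‖ ^ 2) * ‖w‖ ^ 2 :=
    mul_nonneg (sub_nonneg.2 (pow_le_one₀ (norm_nonneg x) hx)) (sq_nonneg _)
  rw [oddDensity, abs_div, abs_of_nonneg (Real.sqrt_nonneg _)]
  exact div_le_one_of_le₀ (Real.abs_le_sqrt (le_add_of_nonneg_right hnonneg)) (Real.sqrt_nonneg _)

theorem one_sub_inner_div_mul_one_add_oddDensity (hx : ‖x‖ < 1) {y : E} (hy : y ≠ 0) :
    (1 - inner ℝ x y / ‖y‖) * (1 + oddDensity x (radialShift x y)) = 1 - ‖x‖ ^ 2 := by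
  have hlt : 0 < ‖y‖ - inner ℝ x y := sub_pos.2 (real_inner_lt_norm_of_norm_lt_one hx hy)
  have hinner : inner ℝ x (radialShift x y) = inner ℝ x y - ‖y‖ * ‖x‖ ^ 2 := by
    rw [radialShift, inner_sub_right, real_inner_smul_right, real_inner_self_eq_norm_sq]
  have hdiscr : inner ℝ x (radialShift x y) ^ 2 + (1 - ‖x‖ ^ 2) * ‖radialShift x y‖ ^ 2 =
      (‖y‖ - inner ℝ x y) ^ 2 := by
    rw [hinner, radialShift, norm_sub_sq_real, real_inner_smul_right, norm_smul, norm_norm,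
      real_inner_comm]
    ring
  rw [oddDensity, hdiscr, Real.sqrt_sq hlt.le, hinner]
  have hy' := norm_ne_zero_iff.2 hy
  field_simp
  ring

variable [FiniteDimensional ℝ E]

theorem det_fderiv (x : E) {y : E} (hy : y ≠ 0) :
    (fderiv ℝ (radialShift x) y).det = 1 - inner ℝ x y / ‖y‖ := by
  rw [(radialShift.hasFDerivAt x hy).fderiv, det_id_add_smulRight, sub_eq_add_neg]
  simp [real_inner_comm, div_eq_inv_mul]

variable [MeasurableSpace E] [BorelSpace E] (μ : Measure E) [μ.IsAddHaarMeasure]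

theorem setIntegral_ball_one_add_oddDensity (hx : ‖x‖ ≤ 1) (r : ℝ) :
    ∫ w in ball 0 r, (1 + oddDensity x w) ∂μ = μ.real (ball 0 r) := by
  have hmeas : Measurable (oddDensity x) := by
    unfold oddDensity
    fun_prop
  have hint : IntegrableOn (oddDensity x) (ball 0 r) μ :=
    Measure.integrableOn_of_bounded measure_ball_lt_top.ne hmeas.aestronglyMeasurable
      (.of_forall (abs_oddDensity_le_one hx))
  have hone : IntegrableOn (fun _ ↦ (1 : ℝ)) (ball (0 : E) r) μ :=
    integrableOn_const measure_ball_lt_top.ne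
  rw [integral_add hone hint, setIntegral_eq_zero_of_odd (odd_oddDensity x) (by ext; simp)]
  simp

theorem one_sub_norm_sq_mul_measureReal_norm_lt_one [Nontrivial E] (hx : ‖x‖ < 1) :
    (1 - ‖x‖ ^ 2) * μ.real {y | ‖radialShift x y‖ < 1} = μ.real (ball 0 1) := by
  set U : Set E := {y | ‖radialShift x y‖ < 1}
  have hU : IsOpen U := isOpen_lt (radialShift.continuous x).norm continuous_const
  have hU₀ : MeasurableSet (U \ {0}) := hU.measurableSet.diff (measurableSet_singleton 0)
  have himage : radialShift x '' (U \ {0}) = ball 0 1 \ {0} := by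
    have hpre : U \ {0} = radialShift x ⁻¹' (ball 0 1 \ {0}) := by
      ext y
      simp [U, eq_zero_iff hx]
    rw [hpre, image_preimage_eq _ (bijective hx).2]
  have hnull (s : Set E) : (s \ {0} : Set E) =ᵐ[μ] s :=
    sdiff_null_ae_eq_self (measure_singleton 0)
  have hjac (y : E) (hy : y ∈ U \ {0}) :
      |(fderiv ℝ (radialShift x) y).det| • (1 + oddDensity x (radialShift x y)) =
        1 - ‖x‖ ^ 2 := by
    have hle : inner ℝ x y / ‖y‖ ≤ 1 :=
      div_le_one_of_le₀ (real_inner_lt_norm_of_norm_lt_one hx hy.2).le (norm_nonneg y)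
    rw [det_fderiv x hy.2, abs_of_nonneg (sub_nonneg.2 hle), smul_eq_mul,
      one_sub_inner_div_mul_one_add_oddDensity hx hy.2]
  have hderiv (y : E) (hy : y ∈ U \ {0}) :
      HasFDerivWithinAt (radialShift x) (fderiv ℝ (radialShift x) y) (U \ {0}) y :=
    (radialShift.hasFDerivAt x hy.2).differentiableAt.hasFDerivAt.hasFDerivWithinAt
  calc (1 - ‖x‖ ^ 2) * μ.real U
      = ∫ _ in U \ {0}, (1 - ‖x‖ ^ 2) ∂μ := by
        rw [setIntegral_const, measureReal_congr (hnull U), smul_eq_mul, mul_comm]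
    _ = ∫ w in radialShift x '' (U \ {0}), (1 + oddDensity x w) ∂μ := by
        rw [integral_image_eq_integral_abs_det_fderiv_smul μ hU₀ hderiv (bijective hx).1.injOn]
        exact (setIntegral_congr_fun hU₀ hjac).symm
    _ = μ.real (ball 0 1) := by
        rw [himage, setIntegral_congr_set (hnull _), setIntegral_ball_one_add_oddDensity μ hx.le]

end InnerProductSpace

end radialShift

/-- The Poisson kernel `(1 - ‖x‖²) / ‖x - ζ‖ⁿ` of the unit ball of a Euclidean space `E` of
dimension `n`, normalized so that it has mean one over the unit sphere. -/
noncomputable def ballPoissonKernel {E : Type*} [NormedAddCommGroup E] [NormedSpace ℝ E]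
    (x ζ : E) : ℝ :=
  (1 - ‖x‖ ^ 2) / ‖x - ζ‖ ^ finrank ℝ E

namespace ballPoissonKernel

section NormedSpace

variable {E : Type*} [NormedAddCommGroup E] [NormedSpace ℝ E] {x ζ : E}

theorem apply_zero_left (hζ : ‖ζ‖ = 1) : ballPoissonKernel 0 ζ = 1 := by
  simp [ballPoissonKernel, hζ]

theorem continuous_sphere (hx : ‖x‖ < 1) :
    Continuous fun ζ : sphere (0 : E) 1 ↦ ballPoissonKernel x ζ := by
  unfold ballPoissonKernel
  exact continuous_const.div (by fun_prop)
    fun ζ ↦ pow_ne_zero _ (norm_sub_pos_of_norm_lt (by simpa using hx)).ne'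

theorem one_sub_norm_div_le [FiniteDimensional ℝ E] [Nontrivial E] (hx : ‖x‖ < 1) (hζ : ‖ζ‖ = 1) :
    (1 - ‖x‖) / (1 + ‖x‖) ^ (finrank ℝ E - 1) ≤ ballPoissonKernel x ζ := by
  have hsq : 0 ≤ 1 - ‖x‖ ^ 2 := sub_nonneg.2 (pow_le_one₀ (norm_nonneg x) hx.le)
  have hle : ‖x - ζ‖ ≤ 1 + ‖x‖ := by simpa [hζ, add_comm] using norm_sub_le x ζ
  calc (1 - ‖x‖) / (1 + ‖x‖) ^ (finrank ℝ E - 1)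
      = (1 - ‖x‖ ^ 2) / (1 + ‖x‖) ^ finrank ℝ E := by
        rw [← mul_pow_sub_one (finrank_pos (R := ℝ) (M := E)).ne']
        field_simp
        ring
    _ ≤ (1 - ‖x‖ ^ 2) / ‖x - ζ‖ ^ finrank ℝ E := by
        have := norm_sub_pos_of_norm_lt (hx.trans_eq hζ.symm)
        gcongr

end NormedSpace

variable {E : Type*} [NormedAddCommGroup E] [InnerProductSpace ℝ E] [FiniteDimensional ℝ E]
  [Nontrivial E] [MeasurableSpace E] [BorelSpace E] {x : E}

theorem average_sphere (μ : Measure E) [μ.IsAddHaarMeasure] (hx : ‖x‖ < 1) :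
    ⨍ ζ : sphere (0 : E) 1, ballPoissonKernel x ζ ∂μ.toSphere = 1 := by
  have hgauge := integral_toSphere_inv_pow_finrank μ (g := fun y ↦ ‖radialShift x y‖)
    (radialShift.continuous x).norm.measurable
    (fun t ht y ↦ by simp [radialShift.apply_smul ht.le, norm_smul, abs_of_pos ht])
    (fun y hy ↦ norm_pos_iff.2 ((radialShift.eq_zero_iff hx).not.2 hy))
  have hmass :
      ∫ ζ : sphere (0 : E) 1, ballPoissonKernel x ζ ∂μ.toSphere = μ.toSphere.real univ :=
    calc ∫ ζ : sphere (0 : E) 1, ballPoissonKernel x ζ ∂μ.toSphere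
        = (1 - ‖x‖ ^ 2) *
            ∫ ζ : sphere (0 : E) 1, (‖radialShift x ζ‖ ^ finrank ℝ E)⁻¹ ∂μ.toSphere := by
          simp_rw [radialShift.norm_apply_of_norm_eq_one x (norm_eq_of_mem_sphere _),
            ballPoissonKernel, div_eq_mul_inv, integral_const_mul]
      _ = finrank ℝ E * μ.real (ball 0 1) := by
          rw [hgauge, ← radialShift.one_sub_norm_sq_mul_measureReal_norm_lt_one μ hx]
          ring
      _ = μ.toSphere.real univ := μ.toSphere_real_apply_univ.symm
  rw [average_eq, hmass, smul_eq_mul, inv_mul_cancel₀]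
  exact (measureReal_ne_zero_iff).2 (Measure.measure_univ_ne_zero.2 μ.toSphere_ne_zero)

end ballPoissonKernel

theorem harmonic_schwarz_explicit_general {E G : Type*} [NormedAddCommGroup E]
    [InnerProductSpace ℝ E] [FiniteDimensional ℝ E] [Nontrivial E] [MeasurableSpace E]
    [BorelSpace E] (μ : Measure E) [μ.IsAddHaarMeasure] [NormedAddCommGroup G] [NormedSpace ℝ G]
    [CompleteSpace G] {ψ : sphere (0 : E) 1 → G} (hψ : AEStronglyMeasurable ψ μ.toSphere)
    {F : E → G} (hF : ∀ x ∈ ball (0 : E) 1,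
      F x = ⨍ ζ : sphere (0 : E) 1, ballPoissonKernel x ζ • ψ ζ ∂μ.toSphere)
    {M : ℝ} (hM : ∀ᵐ ζ ∂μ.toSphere, ‖ψ ζ‖ ≤ M) {x : E} (hx : ‖x‖ < 1) :
    ‖F x - ((1 - ‖x‖) / (1 + ‖x‖) ^ (finrank ℝ E - 1)) • F 0‖ ≤
      M * (1 - (1 - ‖x‖) / (1 + ‖x‖) ^ (finrank ℝ E - 1)) := by
  have : NeZero μ.toSphere := ⟨μ.toSphere_ne_zero⟩
  have hF0 : F 0 = ⨍ ζ, ψ ζ ∂μ.toSphere := by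
    rw [hF 0 (mem_ball_self one_pos)]
    simp [ballPoissonKernel.apply_zero_left]
  rw [hF x (by simpa using hx), hF0]
  have hlower (ζ : sphere (0 : E) 1) :=
    ballPoissonKernel.one_sub_norm_div_le hx (norm_eq_of_mem_sphere ζ)
  have hint := (ballPoissonKernel.continuous_sphere hx).integrable_of_hasCompactSupport
    (μ := (μ.toSphere univ)⁻¹ • μ.toSphere) (.of_compactSpace _)
  refine (norm_integral_smul_sub_smul_integral_le hint (.of_forall hlower) (hψ.smul_measure _)
    (Measure.ae_smul_measure hM _)).trans_eq ?_
  exact congrArg (fun I ↦ M * (I - _)) (ballPoissonKernel.average_sphere μ hx)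

theorem harmonic_schwarz_explicit (n m : ℕ) (hn : 3 ≤ n) (hm : 1 ≤ m)
    (ψ : sphere (0 : EuclideanSpace ℝ (Fin n)) 1 → EuclideanSpace ℝ (Fin m))
    (hψmeas : Measurable ψ)
    (F : EuclideanSpace ℝ (Fin n) → EuclideanSpace ℝ (Fin m))
    (hF : ∀ x ∈ ball (0 : EuclideanSpace ℝ (Fin n)) 1,
      F x = ∫ ζ, poissonKer n x (ζ : EuclideanSpace ℝ (Fin n)) • ψ ζ
        ∂(sphereMeasureNormalized n))
    (M : ℝ) (hMF : ∀ x ∈ ball (0 : EuclideanSpace ℝ (Fin n)) 1, ‖F x‖ ≤ M)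
    (hMψ : ∀ᵐ ζ ∂(sphereMeasureNormalized n), ‖ψ ζ‖ ≤ M)
    (x : EuclideanSpace ℝ (Fin n)) (hx : ‖x‖ < 1) :
    ‖F x - ((1 - ‖x‖) / (1 + ‖x‖) ^ (n - 1)) • F 0‖ ≤
      M * (1 - (1 - ‖x‖) / (1 + ‖x‖) ^ (n - 1)) := by
  have : Nonempty (Fin n) := ⟨⟨0, by lia⟩⟩
  have hM : ∀ᵐ ζ ∂(volume : Measure (EuclideanSpace ℝ (Fin n))).toSphere, ‖ψ ζ‖ ≤ M :=
    (Measure.ae_ennreal_smul_measure_iff (ENNReal.inv_ne_zero.2 (measure_ne_top _ _))).1 hMψ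
  have h := harmonic_schwarz_explicit_general volume hψmeas.aestronglyMeasurable (F := F)
    (by simpa only [average, sphereMeasureNormalized, ballPoissonKernel, poissonKer,
      finrank_euclideanSpace_fin] using hF) hM hx
  rwa [finrank_euclideanSpace_fin] at h
end
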